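/- Let a ∈ ℕ, c ≥ 1, and let 2 ≤ k₁ ≤ k₂ ≤ ⋯ be a nondecreasing sequence of positive integers. Define W₀ = 1 and Wᵢ = W(kᵢ, c^{W₁⋯W_{i−1}}) for i ∈ ℕ. Let l₁, l₂, … be positive integers with l₁ > 0 and, for i ≥ 2, lᵢ > (W₁−1)l₁ + ⋯ + (W_{i−1}−1)l_{i−1}. For i ∈ ℕ set Aᵢ = {a + x₁l₁ + ⋯ + xᵢlᵢ | 0 ≤ x₁ ≤ W₁−1, …, 0 ≤ xᵢ ≤ Wᵢ−1} and A = ⋃_{i∈ℕ} Aᵢ. Then for any c-coloring of A there exist positive integers aᵢ, dᵢ (i ∈ ℕ), with dᵢ = αᵢlᵢ for some positive integer αᵢ satisfying 1 ≤ αᵢ ≤ ⌊(Wᵢ−1)/(kᵢ−1)⌋, such that the sets {aᵢ + x₁d₁ + ⋯ + xᵢdᵢ | 0 ≤ x₁ ≤ k₁−1, …, 0 ≤ xᵢ ≤ kᵢ−1} for all i ∈ ℕ are monochromatic with the same color. -/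

import Mathlib

/-!
Fix the last coordinate `m < Wₙ` of a grid with step `lₙ` and record the colors of all the
`W₁ ⋯ Wₙ₋₁` points of the corresponding slice: this colors `m` with `c ^ (W₁ ⋯ Wₙ₋₁)` colors. A
progression of length `kₙ` that is monochromatic for this coloring consists of slices that are
colored identically, so a monochromatic subgrid of the first of them, which exists by induction on
`n`, repeats in all of them.

The subgrid found inside `Aₙ` has steps `αⱼ lⱼ` with `αⱼ` bounded independently of `n`, so by
compactness (a limit along an ultrafilter) a single sequence `α` and a single color agree, for each
`i`, with the first `i` steps and the color of the subgrid found inside `Aₙ` for some `n ≥ i`.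
-/

/-- `n` witnesses the van der Waerden property for `k` and `c`: every coloring of
`{1,…,n}` with colors `{1,…,c}` contains a monochromatic arithmetic progression of
length `k` inside `{1,…,n}`. -/
def IsVdWWitness (k c n : ℕ) : Prop :=
  ∀ χ : ℕ → ℕ, (∀ m, χ m ∈ Finset.Icc 1 c) →
    ∃ a d : ℕ, 0 < a ∧ 0 < d ∧ a + (k - 1) * d ≤ n ∧
      ∃ γ, ∀ j < k, χ (a + j * d) = γ

/-- The van der Waerden number `W(k,c)`: the least `n` such that every `c`-coloring of
`{1,…,n}` contains a monochromatic arithmetic progression of length `k`. -/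
noncomputable def vdWNumber (k c : ℕ) : ℕ := sInf {n | IsVdWWitness k c n}

open Filter

theorem exists_mem_eventually_eq_of_finite {ι β : Type*} (U : Ultrafilter ι) {s : Set β}
    (hs : s.Finite) {f : ι → β} (hf : ∀ᶠ n in U, f n ∈ s) : ∃ v ∈ s, ∀ᶠ n in U, f n = v := by
  rw [← Ultrafilter.eventually_exists_mem_iff hs]
  exact hf.mono fun n hn ↦ ⟨f n, hn, rfl⟩

theorem eventually_hyperfilter_ge (i : ℕ) : ∀ᶠ n in (hyperfilter ℕ : Filter ℕ), i ≤ n :=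
  Nat.hyperfilter_le_atTop (eventually_ge_atTop i)

theorem exists_diagonal_limit {β κ : Type*} [Finite κ] {F : ℕ → Set β}
    (hF : ∀ j, 1 ≤ j → (F j).Finite) {f : ℕ → ℕ → β} (hf : ∀ n, ∀ j ∈ Finset.Icc 1 n, f n j ∈ F j)
    (γ : ℕ → κ) :
    ∃ (g : ℕ → β) (γ₀ : κ), ∀ i, ∃ n ≥ i, γ n = γ₀ ∧ ∀ j ∈ Finset.Icc 1 i, f n j = g j := by
  have : Nonempty β := ⟨f 0 0⟩
  have hf_mem (j : ℕ) (hj : 1 ≤ j) : ∀ᶠ n in (hyperfilter ℕ : Filter ℕ), f n j ∈ F j :=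
    (eventually_hyperfilter_ge j).mono fun n hn ↦ hf n j (Finset.mem_Icc.2 ⟨hj, hn⟩)
  choose! g _ hg using fun j hj ↦
    exists_mem_eventually_eq_of_finite (hyperfilter ℕ) (hF j hj) (hf_mem j hj)
  obtain ⟨γ₀, -, hγ₀⟩ := exists_mem_eventually_eq_of_finite (hyperfilter ℕ) Set.finite_univ
    (Eventually.of_forall fun n ↦ Set.mem_univ (γ n))
  have hg_all (i : ℕ) :
      ∀ᶠ n in (hyperfilter ℕ : Filter ℕ), ∀ j ∈ Finset.Icc 1 i, f n j = g j :=
    (eventually_all_finset _).2 fun j hj ↦ hg j (Finset.mem_Icc.1 hj).1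
  exact ⟨g, γ₀, fun i ↦ ((eventually_hyperfilter_ge i).and (hγ₀.and (hg_all i))).exists⟩

theorem exists_isVdWWitness (k c : ℕ) : ∃ n, IsVdWWitness k c n := by
  by_contra! h
  simp only [IsVdWWitness, not_forall] at h
  choose χ hχ hbad using h
  let U := hyperfilter ℕ
  choose χlim hχlim hlim using fun m ↦ exists_mem_eventually_eq_of_finite U
    (Finset.Icc 1 c).finite_toSet (Eventually.of_forall fun n ↦ hχ n m)
  obtain ⟨d, hd, b, γ, hγ⟩ := Combinatorics.exists_mono_homothetic_copy (Finset.range k)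
    (fun m ↦ (⟨χlim (m + 1), hχlim (m + 1)⟩ : (Finset.Icc 1 c : Set ℕ)))
  have hle : ∀ᶠ n in U, b + 1 + (k - 1) * d ≤ n := eventually_hyperfilter_ge _
  have hmono : ∀ᶠ n in U, ∀ j ∈ Finset.range k, χ n (b + 1 + j * d) = γ := by
    refine (eventually_all_finset _).2 fun j hj ↦ (hlim (b + 1 + j * d)).mono fun n hn ↦ ?_
    rw [hn, ← hγ j hj, smul_eq_mul, show b + 1 + j * d = d * j + b + 1 by ring]
  obtain ⟨n, hn, hcolor⟩ := (hle.and hmono).exists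
  exact hbad n ⟨b + 1, d, b.succ_pos, hd, hn, γ, fun j hj ↦ hcolor j (Finset.mem_range.2 hj)⟩

theorem isVdWWitness_vdWNumber (k c : ℕ) : IsVdWWitness k c (vdWNumber k c) :=
  Nat.sInf_mem (s := {n | IsVdWWitness k c n}) (exists_isVdWWitness k c)

theorem IsVdWWitness.exists_mono_progression {T : Type*} [Fintype T] {k n : ℕ}
    (h : IsVdWWitness k (Fintype.card T) n) (f : ℕ → T) :
    ∃ y d : ℕ, 0 < d ∧ y + (k - 1) * d < n ∧ ∀ t ≤ k - 1, f (y + t * d) = f y := by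
  let e := Fintype.equivFin T
  obtain ⟨b, d, hb, hd, hle, γ, hγ⟩ := h (fun m ↦ (e (f (m - 1)) : ℕ) + 1) fun m ↦
    Finset.mem_Icc.2 ⟨Nat.le_add_left _ _, (e (f (m - 1))).isLt⟩
  refine ⟨b - 1, d, hd, by omega, fun t ht ↦ ?_⟩
  obtain rfl | ht0 := t.eq_zero_or_pos
  · rw [zero_mul, add_zero]
  · have heq := (hγ t (by omega)).trans (hγ 0 (by omega)).symm
    rw [zero_mul, add_zero, Nat.add_right_cancel_iff, Fin.val_inj, e.apply_eq_iff_eq] at heq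
    rwa [← Nat.sub_add_comm hb]

section Grid

variable {M : Type*} [AddCommMonoid M]

/-- The generalized arithmetic progression `{b + x₁ d₁ + ⋯ + xₙ dₙ | 0 ≤ xⱼ ≤ rⱼ}`. Its `j`-th
side has `r j + 1` points, and sides are indexed from `1`, as in the sets
`Aᵢ = arithGrid a l (W - 1) i`. -/
def arithGrid (b : M) (d : ℕ → M) (r : ℕ → ℕ) (n : ℕ) : Set M :=
  {m | ∃ x : ℕ → ℕ, (∀ j ∈ Finset.Icc 1 n, x j ≤ r j) ∧ m = b + ∑ j ∈ Finset.Icc 1 n, x j • d j}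

variable {a b v m : M} {d d' : ℕ → M} {r : ℕ → ℕ} {n : ℕ}

theorem mem_arithGrid_zero : m ∈ arithGrid b d r 0 ↔ m = b := by
  simp [arithGrid]

theorem mem_arithGrid_succ :
    m ∈ arithGrid b d r (n + 1) ↔
      ∃ p ∈ arithGrid b d r n, ∃ t ≤ r (n + 1), m = p + t • d (n + 1) := by
  constructor
  · rintro ⟨x, hx, rfl⟩
    refine ⟨_, ⟨x, fun j hj ↦ hx j ?_, rfl⟩, x (n + 1), hx _ (by simp), ?_⟩
    · exact Finset.Icc_subset_Icc_right n.le_succ hj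
    · rw [Finset.sum_Icc_succ_top (by omega), add_assoc]
  · rintro ⟨_, ⟨x, hx, rfl⟩, t, ht, rfl⟩
    have hne : ∀ j ∈ Finset.Icc 1 n, j ≠ n + 1 := fun j hj ↦ by
      have := Finset.mem_Icc.1 hj
      omega
    refine ⟨Function.update x (n + 1) t, fun j hj ↦ ?_, ?_⟩
    · obtain rfl | hjn := eq_or_ne j (n + 1)
      · rwa [Function.update_self]
      · rw [Function.update_of_ne hjn]
        rw [Finset.mem_Icc] at hj
        exact hx j (Finset.mem_Icc.2 ⟨hj.1, by omega⟩)
    · rw [Finset.sum_Icc_succ_top (by omega), Function.update_self, add_assoc]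
      congr 2
      exact Finset.sum_congr rfl fun j hj ↦ by rw [Function.update_of_ne (hne j hj)]

theorem arithGrid_mono (b : M) (d : ℕ → M) (r : ℕ → ℕ) : Monotone (arithGrid b d r) :=
  monotone_nat_of_le_succ fun n m hm ↦
    mem_arithGrid_succ.2 ⟨m, hm, 0, Nat.zero_le _, by rw [zero_nsmul, add_zero]⟩

theorem self_mem_arithGrid (b : M) (d : ℕ → M) (r : ℕ → ℕ) (n : ℕ) : b ∈ arithGrid b d r n :=
  arithGrid_mono b d r n.zero_le (mem_arithGrid_zero.2 rfl)

theorem arithGrid_congr (h : ∀ j ∈ Finset.Icc 1 n, d j = d' j) :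
    arithGrid b d r n = arithGrid b d' r n := by
  ext m
  refine exists_congr fun x ↦ and_congr_right fun _ ↦ ?_
  rw [Finset.sum_congr rfl fun j hj ↦ congrArg (x j • ·) (h j hj)]

theorem mem_arithGrid_update {l : ℕ → M} {α : ℕ → ℕ} {e : ℕ} :
    m ∈ arithGrid b (fun j ↦ Function.update α (n + 1) e j • l j) r (n + 1) ↔
      ∃ p ∈ arithGrid b (fun j ↦ α j • l j) r n, ∃ t ≤ r (n + 1), m = p + (t * e) • l (n + 1) := by
  have hsteps : ∀ j ∈ Finset.Icc 1 n, Function.update α (n + 1) e j • l j = α j • l j :=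
    fun j hj ↦ by
      rw [Finset.mem_Icc] at hj
      rw [Function.update_of_ne (by omega)]
  simp only [mem_arithGrid_succ, arithGrid_congr hsteps, Function.update_self, mul_nsmul']

theorem exists_of_mem_arithGrid_add (hm : m ∈ arithGrid (b + v) d r n) :
    ∃ p ∈ arithGrid b d r n, m = p + v := by
  obtain ⟨x, hx, rfl⟩ := hm
  exact ⟨_, ⟨x, hx, rfl⟩, add_right_comm _ _ _⟩

theorem le_of_mem_arithGrid [PartialOrder M] [CanonicallyOrderedAdd M]
    (hm : m ∈ arithGrid b d r n) : b ≤ m := by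
  obtain ⟨x, -, rfl⟩ := hm
  exact le_self_add

variable {κ : Type*} {k W : ℕ → ℕ}

theorem IsVdWWitness.exists_progression_of_identical_slices [Fintype κ] {K N : ℕ}
    (h : IsVdWWitness K (Fintype.card κ ^ ∏ j ∈ Finset.Icc 1 n, W j) N)
    (hW : ∀ j ∈ Finset.Icc 1 n, 0 < W j) (χ : M → κ) (a v : M) (l : ℕ → M) :
    ∃ y e : ℕ, 0 < e ∧ y + (K - 1) * e < N ∧
      ∀ t ≤ K - 1, ∀ p ∈ arithGrid a l (W - 1) n, χ (p + (y + t * e) • v) = χ (p + y • v) := by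
  let T := ((j : Finset.Icc 1 n) → Fin (W j)) → κ
  have hT : Fintype.card T = Fintype.card κ ^ ∏ j ∈ Finset.Icc 1 n, W j := by
    simp only [T, Fintype.card_fun, Fintype.card_pi, Fintype.card_fin,
      Finset.prod_coe_sort (Finset.Icc 1 n) W]
  let slice : ℕ → T := fun s u ↦ χ (a + ∑ j, (u j : ℕ) • l j + s • v)
  rw [← hT] at h
  obtain ⟨y, e, he, hlt, hslice⟩ := h.exists_mono_progression slice
  refine ⟨y, e, he, hlt, ?_⟩
  rintro t ht _ ⟨x, hx, rfl⟩
  let u (j : Finset.Icc 1 n) : Fin (W j) :=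
    ⟨x j, (Nat.le_sub_one_iff_lt (hW j j.2)).1 (hx j j.2)⟩
  rw [← Finset.sum_coe_sort (Finset.Icc 1 n) fun j ↦ x j • l j]
  exact congrFun (hslice t ht) u

theorem exists_mono_subgrid [Fintype κ] (n : ℕ)
    (hW : ∀ i ∈ Finset.Icc 1 n,
      IsVdWWitness (k i) (Fintype.card κ ^ ∏ j ∈ Finset.Icc 1 (i - 1), W j) (W i))
    (χ : M → κ) (l : ℕ → M) (a : M) :
    ∃ (b : M) (α : ℕ → ℕ) (γ : κ),
      (∀ j ∈ Finset.Icc 1 n, 0 < α j ∧ (k j - 1) * α j < W j) ∧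
      arithGrid b (fun j ↦ α j • l j) (k - 1) n ⊆ arithGrid a l (W - 1) n ∧
      ∀ m ∈ arithGrid b (fun j ↦ α j • l j) (k - 1) n, χ m = γ := by
  induction n generalizing a with
  | zero =>
    refine ⟨a, 0, χ a, by simp, fun m hm ↦ ?_, fun m hm ↦ ?_⟩
    · exact mem_arithGrid_zero.2 (mem_arithGrid_zero.1 hm)
    · rw [mem_arithGrid_zero.1 hm]
  | succ n ih =>
    replace ih := ih fun i hi ↦ hW i (Finset.Icc_subset_Icc_right n.le_succ hi)
    have hWpos : ∀ j ∈ Finset.Icc 1 n, 0 < W j := fun j hj ↦ by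
      obtain ⟨_, α, _, hα, -⟩ := ih a
      exact Nat.zero_lt_of_lt (hα j hj).2
    obtain ⟨y, e, he, hlt, hslice⟩ := (hW (n + 1) (by simp)).exists_progression_of_identical_slices
      hWpos χ a (l (n + 1)) l
    obtain ⟨b, α, γ, hα, hsub, hγ⟩ := ih (a + y • l (n + 1))
    have decompose :
        ∀ m ∈ arithGrid b (fun j ↦ Function.update α (n + 1) e j • l j) (k - 1) (n + 1),
        ∃ p ∈ arithGrid a l (W - 1) n, ∃ t ≤ k (n + 1) - 1,
          χ (p + y • l (n + 1)) = γ ∧ m = p + (y + t * e) • l (n + 1) := fun m hm ↦ by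
      obtain ⟨q, hq, t, ht, rfl⟩ := mem_arithGrid_update.1 hm
      obtain ⟨p, hp, rfl⟩ := exists_of_mem_arithGrid_add (hsub hq)
      exact ⟨p, hp, t, ht, hγ _ hq, by rw [add_nsmul, add_assoc]⟩
    refine ⟨b, Function.update α (n + 1) e, γ, fun j hj ↦ ?_, fun m hm ↦ ?_, fun m hm ↦ ?_⟩
    · obtain rfl | hjn := eq_or_ne j (n + 1)
      · rw [Function.update_self]
        omega
      · rw [Function.update_of_ne hjn]
        rw [Finset.mem_Icc] at hj
        exact hα j (Finset.mem_Icc.2 ⟨hj.1, by omega⟩)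
    · obtain ⟨p, hp, t, ht, -, rfl⟩ := decompose m hm
      have hte : t * e ≤ (k (n + 1) - 1) * e := Nat.mul_le_mul_right e ht
      have hside : y + t * e ≤ W (n + 1) - 1 := by omega
      exact mem_arithGrid_succ.2 ⟨p, hp, y + t * e, hside, rfl⟩
    · obtain ⟨p, hp, t, ht, hcolor, rfl⟩ := decompose m hm
      exact (hslice t ht p hp).trans hcolor

theorem generalized_infinitary_vdw_general (hk : ∀ i, 1 ≤ i → 2 ≤ k i) (C : Finset κ)
    (hW : ∀ i, 1 ≤ i → IsVdWWitness (k i) (C.card ^ ∏ j ∈ Finset.Icc 1 (i - 1), W j) (W i))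
    (l : ℕ → M) (a : M) (χ : M → κ)
    (hχ : ∀ i, 1 ≤ i → ∀ m ∈ arithGrid a l (W - 1) i, χ m ∈ C) :
    ∃ (b : ℕ → M) (α : ℕ → ℕ) (γ : κ),
      (∀ i, 1 ≤ i → 1 ≤ α i ∧ α i ≤ (W i - 1) / (k i - 1)) ∧
      ∀ i, 1 ≤ i →
        (∃ n ≥ i, arithGrid (b i) (fun j ↦ α j • l j) (k - 1) i ⊆ arithGrid a l (W - 1) n) ∧
        ∀ m ∈ arithGrid (b i) (fun j ↦ α j • l j) (k - 1) i, χ m = γ := by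
  have hmaps : Set.MapsTo χ {m | ∃ i, 1 ≤ i ∧ m ∈ arithGrid a l (W - 1) i} C :=
    fun m ⟨i, hi, hm⟩ ↦ hχ i hi m hm
  have : Nonempty C := ⟨χ a, hχ 1 le_rfl a (self_mem_arithGrid ..)⟩
  obtain ⟨χ', hχ'⟩ := Subtype.exists_pi_extension (α := fun _ ↦ (C : Type _)) hmaps.restrict
  choose b α γ hα hsub hγ using fun n ↦ exists_mono_subgrid n
    (fun i hi ↦ by simpa using hW i (Finset.mem_Icc.1 hi).1) χ' l a
  have hα_mem (n j : ℕ) (hj : j ∈ Finset.Icc 1 n) :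
      α n j ∈ Set.Icc 1 ((W j - 1) / (k j - 1)) := by
    obtain ⟨hpos, hlt⟩ := hα n j hj
    have hkj := hk j (Finset.mem_Icc.1 hj).1
    exact ⟨hpos, (Nat.le_div_iff_mul_le (by omega)).2 (by rw [mul_comm]; omega)⟩
  obtain ⟨β, γ₀, hlim⟩ := exists_diagonal_limit (fun j _ ↦ Set.finite_Icc _ _) hα_mem γ
  choose N hle hγ₀ hβ using hlim
  have hgrid (i : ℕ) : arithGrid (b (N i)) (fun j ↦ β j • l j) (k - 1) i ⊆
      arithGrid (b (N i)) (fun j ↦ α (N i) j • l j) (k - 1) (N i) := by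
    rw [← arithGrid_congr fun j hj ↦ congrArg (· • l j) (hβ i j hj)]
    exact arithGrid_mono _ _ _ (hle i)
  refine ⟨b ∘ N, β, γ₀, fun i hi ↦ ?_, fun i hi ↦
    ⟨⟨N i, hle i, (hgrid i).trans (hsub (N i))⟩, fun m hm ↦ ?_⟩⟩
  · rw [← hβ i i (Finset.mem_Icc.2 ⟨hi, le_rfl⟩)]
    exact hα_mem (N i) i (Finset.mem_Icc.2 ⟨hi, hle i⟩)
  · have hmA : ∃ i, 1 ≤ i ∧ m ∈ arithGrid a l (W - 1) i :=
      ⟨N i, hi.trans (hle i), hsub (N i) (hgrid i hm)⟩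
    have hχm : (χ' m : κ) = χ m := congrArg Subtype.val (congrFun hχ' ⟨m, hmA⟩)
    rw [← hχm, hγ (N i) m (hgrid i hm), hγ₀ i]

end Grid

/-- **Theorem 2.2 (generalized infinitary van der Waerden theorem).**
Let `a ≥ 1`, `c ≥ 1`, `2 ≤ k₁ ≤ k₂ ≤ ⋯`, `W₀ = 1`, `Wᵢ = W(kᵢ, c^{W₁⋯W_{i−1}})`, and let
`l₁, l₂, …` be positive with `l₁ > 0` and `lᵢ > (W₁−1)l₁ + ⋯ + (W_{i−1}−1)l_{i−1}` for
`i ≥ 2`. Set `Aᵢ = {a + x₁l₁ + ⋯ + xᵢlᵢ | 0 ≤ xⱼ ≤ Wⱼ−1}` and `A = ⋃ᵢ Aᵢ`. Then for any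
`c`-coloring `χ` of `A` there are positive integers `aᵢ, dᵢ` with `dᵢ = αᵢlᵢ`,
`1 ≤ αᵢ ≤ ⌊(Wᵢ−1)/(kᵢ−1)⌋`, such that all the sets
`{aᵢ + x₁d₁ + ⋯ + xᵢdᵢ | 0 ≤ xⱼ ≤ kⱼ−1}` are monochromatic with the same color. -/
theorem generalized_infinitary_vdw
    (a c : ℕ) (ha : 1 ≤ a) (hc : 1 ≤ c)
    (k : ℕ → ℕ) (hk2 : 2 ≤ k 1) (hkmono : ∀ i, 1 ≤ i → k i ≤ k (i + 1))
    (W : ℕ → ℕ) (hW0 : W 0 = 1)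
    (hW : ∀ i, 1 ≤ i →
      W i = vdWNumber (k i) (c ^ ∏ j ∈ Finset.Icc 1 (i - 1), W j))
    (l : ℕ → ℕ) (hl1 : 0 < l 1) (hlpos : ∀ i, 1 ≤ i → 0 < l i)
    (hl : ∀ i, 2 ≤ i →
      (∑ j ∈ Finset.Icc 1 (i - 1), (W j - 1) * l j) < l i)
    (A : Set ℕ)
    (hA : A = {m | ∃ i, 1 ≤ i ∧ ∃ x : ℕ → ℕ,
      (∀ j ∈ Finset.Icc 1 i, x j ≤ W j - 1) ∧ m = a + ∑ j ∈ Finset.Icc 1 i, x j * l j})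
    (χ : ℕ → ℕ) (hχ : ∀ m ∈ A, χ m ∈ Finset.Icc 1 c) :
    ∃ (a' : ℕ → ℕ) (α : ℕ → ℕ) (γ : ℕ),
      (∀ i, 1 ≤ i → 0 < a' i) ∧
      (∀ i, 1 ≤ i → 1 ≤ α i ∧ α i ≤ (W i - 1) / (k i - 1)) ∧
      (∀ i, 1 ≤ i → ∀ x : ℕ → ℕ, (∀ j, 1 ≤ j → j ≤ i → x j ≤ k j - 1) →
        χ (a' i + ∑ j ∈ Finset.Icc 1 i, x j * (α j * l j)) = γ) := by
  have hk (i : ℕ) (hi : 1 ≤ i) : 2 ≤ k i := by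
    induction i, hi using Nat.le_induction with
    | base => exact hk2
    | succ i hi ih => exact ih.trans (hkmono i hi)
  have hWwitness (i : ℕ) (hi : 1 ≤ i) :
      IsVdWWitness (k i) ((Finset.Icc 1 c).card ^ ∏ j ∈ Finset.Icc 1 (i - 1), W j) (W i) := by
    rw [Nat.card_Icc, Nat.add_sub_cancel, hW i hi]
    exact isVdWWitness_vdWNumber _ _
  obtain ⟨b, α, γ, hα, hgrid⟩ := generalized_infinitary_vdw_general hk (Finset.Icc 1 c) hWwitness
    l a χ fun i hi m hm ↦ hχ m (hA ▸ ⟨i, hi, hm⟩)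
  refine ⟨b, α, γ, fun i hi ↦ ?_, hα, fun i hi x hx ↦ ?_⟩
  · obtain ⟨n, -, hsub⟩ := (hgrid i hi).1
    exact ha.trans (le_of_mem_arithGrid (hsub (self_mem_arithGrid ..)))
  · exact (hgrid i hi).2 _ ⟨x, fun j hj ↦ hx j (Finset.mem_Icc.1 hj).1 (Finset.mem_Icc.1 hj).2, rfl⟩
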